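/- Fix λ' > 0 and let u(y) = (λ'/(λ'² + |y|²))^{(N−4)/2} (the bubble centered at ξ' = 0). Then ∫_{ℝ^N} Σ_{i,j,m,s=1}^N (∂_i H̄_{ms})(y) (∂_j H̄_{ms})(y) (∂_i u)(y) (∂_j u)(y) dy = |S^{N−1}| · (Σ_{i,j,k,ℓ=1}^N (W_{ikjℓ}+W_{iℓjk})²) · λ'^{N−4} · [2(N−4)²/(N(N+2))] · ∫₀^∞ [ r² f'(r²) + f(r²) ]² r^{N+3}/(λ'²+r²)^{N−2} dr. -/

import Mathlib

open scoped BigOperators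
open MeasureTheory

noncomputable section

/-- The partial derivative `∂f/∂y_i` of a function on Euclidean space. -/
def pd (N : ℕ) (i : Fin N) (f : EuclideanSpace ℝ (Fin N) → ℝ) :
    EuclideanSpace ℝ (Fin N) → ℝ :=
  fun y => fderiv ℝ f y (EuclideanSpace.single i 1)

/-- `H_{ij}(y) = Σ_{p,q} W_{ipjq} y_p y_q`. -/
def Hmat (N : ℕ) (W : Fin N → Fin N → Fin N → Fin N → ℝ) (i j : Fin N)
    (y : EuclideanSpace ℝ (Fin N)) : ℝ :=
  ∑ p : Fin N, ∑ q : Fin N, W i p j q * y p * y q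

/-- `H̄_{ij}(y) = f(|y|²) H_{ij}(y)`. -/
def Hbar (N : ℕ) (W : Fin N → Fin N → Fin N → Fin N → ℝ) (f : ℝ → ℝ) (i j : Fin N)
    (y : EuclideanSpace ℝ (Fin N)) : ℝ :=
  f (‖y‖ ^ 2) * Hmat N W i j y

/-- The surface measure on the unit sphere `S^{N-1} ⊂ ℝ^N`. -/
def sphereMeasure (N : ℕ) :
    Measure (Metric.sphere (0 : EuclideanSpace ℝ (Fin N)) 1) :=
  (volume : Measure (EuclideanSpace ℝ (Fin N))).toSphere

/-- `|S^{N-1}|`, the total surface measure of the unit sphere in `ℝ^N`. -/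
def sphereArea (N : ℕ) : ℝ := (sphereMeasure N Set.univ).toReal

/-- Polar coordinates for (degree 4 homogeneous) times radial. -/
lemma polar4 (N : ℕ) (hN : 25 ≤ N) (h : EuclideanSpace ℝ (Fin N) → ℝ) (g : ℝ → ℝ)
    (hh : ∀ (t : ℝ) y, h (t • y) = t ^ 4 * h y) :
    ∫ y : EuclideanSpace ℝ (Fin N), h y * g ‖y‖
      = (∫ x, h (x : EuclideanSpace ℝ (Fin N)) ∂(sphereMeasure N))
        * ∫ r in Set.Ioi (0 : ℝ), r ^ (N + 3) * g r := by
  have hnt : Nontrivial (EuclideanSpace ℝ (Fin N)) := by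
    have : Nonempty (Fin N) := ⟨⟨0, by omega⟩⟩
    infer_instance
  have hdim : Module.finrank ℝ (EuclideanSpace ℝ (Fin N)) = N := by simp
  have h1 : ∫ y : (EuclideanSpace ℝ (Fin N)), h y * g ‖y‖ =
      ∫ x : ({(0 : (EuclideanSpace ℝ (Fin N)))}ᶜ : Set (EuclideanSpace ℝ (Fin N))), h x.1 * g ‖x.1‖ ∂((volume : Measure (EuclideanSpace ℝ (Fin N))).comap (↑)) := by
    rw [integral_subtype_comap (measurableSet_singleton _).compl fun x : (EuclideanSpace ℝ (Fin N)) ↦ h x * g ‖x‖,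
      restrict_compl_singleton]
  have h2 := (volume : Measure (EuclideanSpace ℝ (Fin N))).measurePreserving_homeomorphUnitSphereProd.integral_comp
    (Homeomorph.measurableEmbedding _)
    (fun z : Metric.sphere (0 : (EuclideanSpace ℝ (Fin N))) 1 × Set.Ioi (0 : ℝ) => h z.1.1 * (z.2.1 ^ 4 * g z.2.1))
  rw [h1]
  have h3 : (∫ x : ({(0 : (EuclideanSpace ℝ (Fin N)))}ᶜ : Set (EuclideanSpace ℝ (Fin N))), h x.1 * g ‖x.1‖ ∂((volume : Measure (EuclideanSpace ℝ (Fin N))).comap (↑)))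
     = ∫ x, (fun z : Metric.sphere (0 : (EuclideanSpace ℝ (Fin N))) 1 × Set.Ioi (0 : ℝ) => h z.1.1 * (z.2.1 ^ 4 * g z.2.1))
        (homeomorphUnitSphereProd (EuclideanSpace ℝ (Fin N)) x) ∂((volume : Measure (EuclideanSpace ℝ (Fin N))).comap (↑)) := by
    congr 1
    funext x
    have hx : ‖x.1‖ ≠ 0 := norm_ne_zero_iff.mpr x.2
    simp only [homeomorphUnitSphereProd_apply_fst_coe, homeomorphUnitSphereProd_apply_snd_coe, hh]
    field_simp
  rw [h3, h2, integral_prod_mul (fun x : Metric.sphere (0 : (EuclideanSpace ℝ (Fin N))) 1 => h x.1)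
    (fun r : Set.Ioi (0 : ℝ) => r.1 ^ 4 * g r.1)]
  have h4 : (∫ r : Set.Ioi (0 : ℝ), r.1 ^ 4 * g r.1
      ∂(Measure.volumeIoiPow (Module.finrank ℝ (EuclideanSpace ℝ (Fin N)) - 1))) =
      ∫ r in Set.Ioi (0 : ℝ), r ^ (N + 3) * g r := by
    rw [hdim, Measure.volumeIoiPow, integral_withDensity_eq_integral_toReal_smul,
      ← integral_subtype_comap measurableSet_Ioi]
    · congr 1
      funext r
      have hr : (0 : ℝ) < r.1 := r.2
      rw [ENNReal.toReal_ofReal (by positivity), smul_eq_mul, ← mul_assoc, ← pow_add]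
      congr 2
      omega
    · fun_prop
    · simp
  rw [h4]
  rfl

lemma cont_sphere_integrable (N : ℕ) (h : EuclideanSpace ℝ (Fin N) → ℝ) (hc : Continuous h) :
    Integrable (fun x : Metric.sphere (0 : EuclideanSpace ℝ (Fin N)) 1 => h x)
      (sphereMeasure N) := by
  have hc' : Continuous (fun x : Metric.sphere (0 : EuclideanSpace ℝ (Fin N)) 1 => h x) :=
    hc.comp continuous_subtype_val
  have : IsFiniteMeasure (sphereMeasure N) := by unfold sphereMeasure; infer_instance
  have : CompactSpace (Metric.sphere (0 : EuclideanSpace ℝ (Fin N)) 1) :=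
    isCompact_iff_compactSpace.mp (isCompact_sphere _ _)
  exact hc'.integrable_of_hasCompactSupport (HasCompactSupport.of_compactSpace _)

/-- fourth power moment -/
def Kfour (N : ℕ) (v : EuclideanSpace ℝ (Fin N)) : ℝ :=
  ∫ x, (inner ℝ v (x : EuclideanSpace ℝ (Fin N))) ^ 4 ∂(sphereMeasure N)

lemma Kfour_eq_of_norm (N : ℕ) (hN : 25 ≤ N) (v w : EuclideanSpace ℝ (Fin N))
    (h : ‖v‖ = ‖w‖) : Kfour N v = Kfour N w := by
  set g : ℝ → ℝ := Set.indicator (Set.Iic 1) (fun _ => 1) with hg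
  have hR : ∫ r in Set.Ioi (0 : ℝ), r ^ (N + 3) * g r ≠ 0 := by
    have : ∫ r in Set.Ioi (0 : ℝ), r ^ (N + 3) * g r = ∫ r in (0 : ℝ)..1, r ^ (N + 3) := by
      rw [intervalIntegral.integral_of_le zero_le_one]
      have : (fun r : ℝ => r ^ (N + 3) * g r) =
          Set.indicator (Set.Iic 1) (fun r : ℝ => r ^ (N + 3)) := by
        funext r
        by_cases hr : r ∈ Set.Iic (1 : ℝ) <;> simp [hg, hr]
      rw [this, setIntegral_indicator measurableSet_Iic, Set.Ioi_inter_Iic]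
    rw [this, integral_pow]
    simp
    positivity
  have key : ∀ v, ∫ y : EuclideanSpace ℝ (Fin N), (inner ℝ v y) ^ 4 * g ‖y‖
      = Kfour N v * ∫ r in Set.Ioi (0 : ℝ), r ^ (N + 3) * g r := by
    intro v
    rw [polar4 N hN (fun y => (inner ℝ v y) ^ 4) g]
    · rfl
    · intro t y
      rw [inner_smul_right]; ring
  set T := Submodule.reflection (Submodule.span ℝ {v - w})ᗮ with hT
  have hTv : T v = w := Submodule.reflection_sub h
  have e : ∫ y : EuclideanSpace ℝ (Fin N), (inner ℝ v y) ^ 4 * g ‖y‖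
      = ∫ y : EuclideanSpace ℝ (Fin N), (inner ℝ w y) ^ 4 * g ‖y‖ := by
    rw [← (T.measurePreserving).integral_comp T.toHomeomorph.measurableEmbedding
      (fun y => (inner ℝ w y) ^ 4 * g ‖y‖)]
    congr 1
    funext y
    rw [T.norm_map, ← hTv, T.inner_map_map]
  rw [key, key] at e
  exact mul_right_cancel₀ hR e

lemma Kfour_smul (N : ℕ) (t : ℝ) (v : EuclideanSpace ℝ (Fin N)) :
    Kfour N (t • v) = t ^ 4 * Kfour N v := by
  unfold Kfour
  rw [← integral_const_mul]
  congr 1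
  funext x
  rw [real_inner_smul_left]; ring

lemma Kfour_formula (N : ℕ) (hN : 25 ≤ N) :
    ∃ c : ℝ, ∀ v : EuclideanSpace ℝ (Fin N), Kfour N v = 3 * c * (‖v‖ ^ 2) ^ 2 := by
  set e : EuclideanSpace ℝ (Fin N) := EuclideanSpace.single ⟨0, by omega⟩ 1 with he
  refine ⟨Kfour N e / 3, fun v => ?_⟩
  rw [Kfour_eq_of_norm N hN v (‖v‖ • e), Kfour_smul]
  · ring
  · simp [norm_smul, he]

lemma moment4 (N : ℕ) (c : ℝ)
    (hc : ∀ v : EuclideanSpace ℝ (Fin N), Kfour N v = 3 * c * (‖v‖ ^ 2) ^ 2)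
    (v1 v2 v3 v4 : EuclideanSpace ℝ (Fin N)) :
    ∫ x, inner ℝ v1 (x : EuclideanSpace ℝ (Fin N)) * inner ℝ v2 (x : EuclideanSpace ℝ (Fin N))
        * inner ℝ v3 (x : EuclideanSpace ℝ (Fin N)) * inner ℝ v4 (x : EuclideanSpace ℝ (Fin N))
        ∂(sphereMeasure N)
      = c * (inner ℝ v1 v2 * inner ℝ v3 v4 + inner ℝ v1 v3 * inner ℝ v2 v4
          + inner ℝ v1 v4 * inner ℝ v2 v3) := by
  have hI : ∀ v : EuclideanSpace ℝ (Fin N), Integrable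
      (fun x : Metric.sphere (0 : EuclideanSpace ℝ (Fin N)) 1 => (inner ℝ v x.1) ^ 4)
      (sphereMeasure N) := fun v =>
    cont_sphere_integrable N (fun y => (inner ℝ v y) ^ 4) (by fun_prop)
  have hs : ∀ s2 s3 s4 : ℝ, ‖v1 + s2 • v2 + s3 • v3 + s4 • v4‖ ^ 2 =
      inner ℝ v1 v1 + s2 ^ 2 * inner ℝ v2 v2 + s3 ^ 2 * inner ℝ v3 v3 + s4 ^ 2 * inner ℝ v4 v4
      + 2 * (s2 * inner ℝ v1 v2 + s3 * inner ℝ v1 v3 + s4 * inner ℝ v1 v4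
        + s2 * s3 * inner ℝ v2 v3 + s2 * s4 * inner ℝ v2 v4 + s3 * s4 * inner ℝ v3 v4) := by
    intro s2 s3 s4
    rw [← real_inner_self_eq_norm_sq]
    simp only [inner_add_left, inner_add_right, real_inner_smul_left, real_inner_smul_right]
    rw [real_inner_comm v1 v2, real_inner_comm v1 v3, real_inner_comm v1 v4,
      real_inner_comm v2 v3, real_inner_comm v2 v4, real_inner_comm v3 v4]
    ring
  let V : ℝ → ℝ → ℝ → EuclideanSpace ℝ (Fin N) := fun s2 s3 s4 =>
    v1 + s2 • v2 + s3 • v3 + s4 • v4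
  have hpt : ∀ x : Metric.sphere (0 : EuclideanSpace ℝ (Fin N)) 1,
      inner ℝ v1 x.1 * inner ℝ v2 x.1 * inner ℝ v3 x.1 * inner ℝ v4 x.1
      = (1 / 192) * ((((((((inner ℝ (V 1 1 1) x.1) ^ 4 - (inner ℝ (V 1 1 (-1)) x.1) ^ 4)
        - (inner ℝ (V 1 (-1) 1) x.1) ^ 4) + (inner ℝ (V 1 (-1) (-1)) x.1) ^ 4)
        - (inner ℝ (V (-1) 1 1) x.1) ^ 4) + (inner ℝ (V (-1) 1 (-1)) x.1) ^ 4)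
        + (inner ℝ (V (-1) (-1) 1) x.1) ^ 4) - (inner ℝ (V (-1) (-1) (-1)) x.1) ^ 4) := by
    intro x
    simp only [V, inner_add_left, real_inner_smul_left]
    ring
  have hcomp : ∀ h : Metric.sphere (0 : EuclideanSpace ℝ (Fin N)) 1 → ℝ, Continuous h →
      Integrable h (sphereMeasure N) := by
    intro h hcont
    have : IsFiniteMeasure (sphereMeasure N) := by unfold sphereMeasure; infer_instance
    have : CompactSpace (Metric.sphere (0 : EuclideanSpace ℝ (Fin N)) 1) :=
      isCompact_iff_compactSpace.mp (isCompact_sphere _ _)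
    exact hcont.integrable_of_hasCompactSupport (HasCompactSupport.of_compactSpace _)
  rw [integral_congr_ae (Filter.Eventually.of_forall hpt), integral_const_mul,
    integral_sub, integral_add, integral_add, integral_sub, integral_add, integral_sub,
    integral_sub]
  rotate_left
  iterate 14 exact hcomp _ (by fun_prop)
  have hK : ∀ v : EuclideanSpace ℝ (Fin N),
      ∫ x : Metric.sphere (0 : EuclideanSpace ℝ (Fin N)) 1, (inner ℝ v x.1) ^ 4
        ∂(sphereMeasure N) = 3 * c * (‖v‖ ^ 2) ^ 2 := hc
  simp only [hK]
  simp only [V, hs]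
  ring

lemma coordMoment (N : ℕ) (c : ℝ)
    (hc : ∀ v : EuclideanSpace ℝ (Fin N), Kfour N v = 3 * c * (‖v‖ ^ 2) ^ 2)
    (p q k l : Fin N) :
    ∫ x : Metric.sphere (0 : EuclideanSpace ℝ (Fin N)) 1, x.1 p * x.1 q * x.1 k * x.1 l
        ∂(sphereMeasure N)
      = c * ((if p = q then 1 else 0) * (if k = l then 1 else 0)
        + (if p = k then 1 else 0) * (if q = l then 1 else 0)
        + (if p = l then 1 else 0) * (if q = k then 1 else 0)) := by
  have := moment4 N c hc (EuclideanSpace.single p 1) (EuclideanSpace.single q 1)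
    (EuclideanSpace.single k 1) (EuclideanSpace.single l 1)
  simpa [EuclideanSpace.inner_single_left, Pi.single_apply, eq_comm] using this

lemma c_value (N : ℕ) (hN : 25 ≤ N) (c : ℝ)
    (hc : ∀ v : EuclideanSpace ℝ (Fin N), Kfour N v = 3 * c * (‖v‖ ^ 2) ^ 2) :
    c = sphereArea N / (N * ((N : ℝ) + 2)) := by
  have h1 : ∫ x : Metric.sphere (0 : EuclideanSpace ℝ (Fin N)) 1,
      ∑ p : Fin N, ∑ k : Fin N, x.1 p * x.1 p * x.1 k * x.1 k ∂(sphereMeasure N)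
      = sphereArea N := by
    have : ∀ x : Metric.sphere (0 : EuclideanSpace ℝ (Fin N)) 1,
      ∑ p : Fin N, ∑ k : Fin N, x.1 p * x.1 p * x.1 k * x.1 k = 1 := by
      intro x
      have hx : ‖x.1‖ ^ 2 = 1 := by simp
      rw [EuclideanSpace.real_norm_sq_eq] at hx
      have : ∑ p : Fin N, ∑ k : Fin N, x.1 p * x.1 p * x.1 k * x.1 k
          = (∑ p : Fin N, x.1 p ^ 2) * (∑ p : Fin N, x.1 p ^ 2) := by
        rw [Finset.sum_mul_sum]
        refine Finset.sum_congr rfl fun p _ => Finset.sum_congr rfl fun k _ => ?_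
        ring
      rw [this, hx]; norm_num
    simp only [this]
    simp [sphereArea, Measure.real]
  rw [integral_finsetSum] at h1
  · have h2 : ∀ p : Fin N, ∫ x : Metric.sphere (0 : EuclideanSpace ℝ (Fin N)) 1,
      ∑ k : Fin N, x.1 p * x.1 p * x.1 k * x.1 k ∂(sphereMeasure N) = c * (N + 2) := by
      intro p
      rw [integral_finsetSum]
      · simp only [coordMoment N c hc]
        rw [← Finset.mul_sum]
        simp [Finset.sum_add_distrib]
        left; ring
      · intro k _
        exact cont_sphere_integrable N (fun y => y p * y p * y k * y k) (by fun_prop)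
    simp only [h2] at h1
    simp at h1
    rw [← h1]
    have : (N : ℝ) ≠ 0 := by
      have : 0 < N := by omega
      positivity
    field_simp
  · intro p _
    exact cont_sphere_integrable N (fun y => ∑ k : Fin N, y p * y p * y k * y k) (by fun_prop)

lemma quadMoment (N : ℕ) (c : ℝ)
    (hc : ∀ v : EuclideanSpace ℝ (Fin N), Kfour N v = 3 * c * (‖v‖ ^ 2) ^ 2)
    (a : Fin N → Fin N → ℝ) (htr : ∑ p, a p p = 0) :
    ∫ x : Metric.sphere (0 : EuclideanSpace ℝ (Fin N)) 1,
      (∑ p, ∑ q, a p q * x.1 p * x.1 q) ^ 2 ∂(sphereMeasure N)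
      = c / 2 * ∑ p, ∑ q, (a p q + a q p) ^ 2 := by
  have h1 : ∀ x : Metric.sphere (0 : EuclideanSpace ℝ (Fin N)) 1,
      (∑ p, ∑ q, a p q * x.1 p * x.1 q) ^ 2
      = ∑ z : (Fin N × Fin N) × (Fin N × Fin N), (a z.1.1 z.1.2 * a z.2.1 z.2.2) *
        (x.1 z.1.1 * x.1 z.1.2 * x.1 z.2.1 * x.1 z.2.2) := by
    intro x
    rw [← Fintype.sum_prod_type' (f := fun p q => a p q * x.1 p * x.1 q), sq, Finset.sum_mul_sum,
      ← Fintype.sum_prod_type']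
    refine Finset.sum_congr rfl fun z _ => ?_
    ring
  simp only [h1]
  rw [integral_finsetSum]
  · simp only [integral_const_mul, coordMoment N c hc]
    simp only [Fintype.sum_prod_type]
    have h2 : ∀ p q : Fin N, ∑ k, ∑ l, a p q * a k l *
        (c * ((if p = q then 1 else 0) * (if k = l then 1 else 0)
        + (if p = k then 1 else 0) * (if q = l then 1 else 0)
        + (if p = l then 1 else 0) * (if q = k then 1 else 0)))
        = c * ((if p = q then a p q else 0) * ∑ k, a k k + a p q * a p q + a p q * a q p) := by
      intro p q
      have : ∀ k l, a p q * a k l *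
        (c * ((if p = q then 1 else 0) * (if k = l then 1 else 0)
        + (if p = k then 1 else 0) * (if q = l then 1 else 0)
        + (if p = l then 1 else 0) * (if q = k then 1 else 0)))
        = c * ((if p = q then a p q else 0) * (if k = l then a k l else 0))
          + (if p = k then (if q = l then c * (a p q * a k l) else 0) else 0)
          + (if q = k then (if p = l then c * (a p q * a k l) else 0) else 0) := by
        intro k l
        split_ifs <;> ring
      simp only [this, Finset.sum_add_distrib, ← Finset.mul_sum]
      by_cases hpq : p = q
      · simp [hpq]
        ring
      · simp [hpq]
        ring
    simp only [h2, htr]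
    have h3 : ∑ p, ∑ q, (a p q + a q p) ^ 2
        = ∑ p, ∑ q, (a p q * a p q) + ∑ p, ∑ q, (a q p * a q p)
          + 2 * ∑ p, ∑ q, (a p q * a q p) := by
      simp only [Finset.mul_sum, ← Finset.sum_add_distrib]
      refine Finset.sum_congr rfl fun p _ => Finset.sum_congr rfl fun k _ => ?_
      ring
    have h4 : ∑ p, ∑ q, (a q p * a q p) = ∑ p, ∑ q, (a p q * a p q) := Finset.sum_comm
    rw [h3, h4]
    simp only [mul_zero, zero_add, ← Finset.mul_sum, Finset.sum_add_distrib]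
    ring
  · intro z _
    exact (cont_sphere_integrable N (fun y => y z.1.1 * y z.1.2 * y z.2.1 * y z.2.2)
      (by fun_prop)).const_mul _

lemma pd_u (N : ℕ) (hN : 25 ≤ N) (lam' : ℝ) (hlam' : 0 < lam')
    (u : EuclideanSpace ℝ (Fin N) → ℝ)
    (hu : ∀ y, u y = (lam' / (lam' ^ 2 + ‖y‖ ^ 2)) ^ (((N : ℝ) - 4) / 2))
    (y : EuclideanSpace ℝ (Fin N)) :
    ∃ C : ℝ, (∀ i, pd N i u y = C * y i) ∧
      C ^ 2 = ((N : ℝ) - 4) ^ 2 * lam' ^ (N - 4) / (lam' ^ 2 + ‖y‖ ^ 2) ^ (N - 2) := by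
  have hD : 0 < lam' ^ 2 + ‖y‖ ^ 2 := by positivity
  set D := lam' ^ 2 + ‖y‖ ^ 2 with hDdef
  have hq : 0 < lam' / D := by positivity
  have h1 : HasDerivAt (fun t : ℝ => (lam' / (lam' ^ 2 + t)) ^ (((N : ℝ) - 4) / 2))
      (-lam' / D ^ 2 * (((N : ℝ) - 4) / 2) * (lam' / D) ^ (((N : ℝ) - 4) / 2 - 1)) (‖y‖ ^ 2) := by
    have h0 : HasDerivAt (fun t : ℝ => lam' / (lam' ^ 2 + t)) (-lam' / D ^ 2) (‖y‖ ^ 2) := by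
      have := (hasDerivAt_const (‖y‖ ^ 2) lam').div
        ((hasDerivAt_id (‖y‖ ^ 2)).const_add (lam' ^ 2)) hD.ne'
      refine this.congr_deriv ?_
      simp [hDdef]
    exact h0.rpow_const (Or.inl hq.ne')
  have h2 : HasFDerivAt (fun y : EuclideanSpace ℝ (Fin N) => ‖y‖ ^ 2) (2 • innerSL ℝ y) y :=
    (hasStrictFDerivAt_norm_sq y).hasFDerivAt
  have h3 := h1.comp_hasFDerivAt y h2
  have hue : u = (fun t : ℝ => (lam' / (lam' ^ 2 + t)) ^ (((N : ℝ) - 4) / 2)) ∘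
      (fun y : EuclideanSpace ℝ (Fin N) => ‖y‖ ^ 2) := by
    funext z; simp [hu]
  rw [← hue] at h3
  refine ⟨(-lam' / D ^ 2 * (((N : ℝ) - 4) / 2) * (lam' / D) ^ (((N : ℝ) - 4) / 2 - 1)) * 2,
    fun i => ?_, ?_⟩
  · rw [pd, h3.fderiv]
    simp [EuclideanSpace.inner_single_right]
    ring
  · have h4 : ((lam' / D) ^ (((N : ℝ) - 4) / 2 - 1)) ^ 2 = (lam' / D) ^ (N - 6) := by
      rw [← Real.rpow_natCast, ← Real.rpow_mul hq.le, ← Real.rpow_natCast]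
      congr 1
      rw [Nat.cast_sub (by omega)]
      push_cast
      ring
    rw [mul_pow, mul_pow, h4]
    obtain ⟨n, rfl⟩ : ∃ n, N = n + 6 := ⟨N - 6, by omega⟩
    simp only [Nat.add_sub_cancel, show n + 6 - 4 = n + 2 by omega, show n + 6 - 2 = n + 4 by omega]
    rw [div_pow lam' D n]
    field_simp
    ring

lemma euler_Hbar (N : ℕ) (W : Fin N → Fin N → Fin N → Fin N → ℝ) (f : ℝ → ℝ)
    (hfd : Differentiable ℝ f) (m s : Fin N) (y : EuclideanSpace ℝ (Fin N)) :
    ∑ i, pd N i (Hbar N W f m s) y * y i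
      = 2 * (‖y‖ ^ 2 * deriv f (‖y‖ ^ 2) + f (‖y‖ ^ 2)) * Hmat N W m s y := by
  have hd : DifferentiableAt ℝ (Hbar N W f m s) y := by
    unfold Hbar Hmat
    refine DifferentiableAt.mul ?_ ?_
    · exact (hfd _).comp y (hasStrictFDerivAt_norm_sq y).hasFDerivAt.differentiableAt
    · fun_prop
  have h1 : ∑ i, pd N i (Hbar N W f m s) y * y i = fderiv ℝ (Hbar N W f m s) y y := by
    have hy : y = ∑ i, y i • (EuclideanSpace.single i (1 : ℝ)) := by
      ext j
      simp [Finset.sum_apply, Pi.single_apply]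
    conv_rhs => rw [hy]
    conv_rhs => enter [1]; rw [← hy]
    rw [map_sum]
    refine Finset.sum_congr rfl fun i _ => ?_
    rw [map_smul, smul_eq_mul, pd, mul_comm]
  have h2 : HasDerivAt (fun t : ℝ => Hbar N W f m s (t • y)) (fderiv ℝ (Hbar N W f m s) y y) 1 := by
    have ht : HasDerivAt (fun t : ℝ => t • y) y 1 := by
      simpa using (hasDerivAt_id (1 : ℝ)).smul_const y
    have hd' : HasFDerivAt (Hbar N W f m s) (fderiv ℝ (Hbar N W f m s) y) ((1 : ℝ) • y) := by
      rw [one_smul]; exact hd.hasFDerivAt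
    exact hd'.comp_hasDerivAt 1 ht
  have h3 : (fun t : ℝ => Hbar N W f m s (t • y))
      = fun t : ℝ => f (t ^ 2 * ‖y‖ ^ 2) * (t ^ 2 * Hmat N W m s y) := by
    funext t
    unfold Hbar Hmat
    rw [norm_smul, mul_pow, Real.norm_eq_abs, sq_abs]
    congr 1
    simp only [Finset.mul_sum, PiLp.smul_apply, smul_eq_mul]
    refine Finset.sum_congr rfl fun p _ => Finset.sum_congr rfl fun k _ => ?_
    ring
  rw [h3] at h2
  have h4 : HasDerivAt (fun t : ℝ => f (t ^ 2 * ‖y‖ ^ 2) * (t ^ 2 * Hmat N W m s y))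
      (2 * (‖y‖ ^ 2 * deriv f (‖y‖ ^ 2) + f (‖y‖ ^ 2)) * Hmat N W m s y) 1 := by
    have hsq : HasDerivAt (fun t : ℝ => t ^ 2) 2 1 := by
      simpa using hasDerivAt_pow 2 (1 : ℝ)
    have hfc : HasDerivAt f (deriv f (‖y‖ ^ 2)) ((1 : ℝ) ^ 2 * ‖y‖ ^ 2) := by
      rw [one_pow, one_mul]; exact (hfd _).hasDerivAt
    have := (hfc.comp (1 : ℝ) (hsq.mul_const (‖y‖ ^ 2))).mul (hsq.mul_const (Hmat N W m s y))
    refine this.congr_deriv ?_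
    simp
    ring
  rw [h1]
  exact h2.unique h4

theorem stmt_17 (N : ℕ) (hN : 25 ≤ N)
    (W : Fin N → Fin N → Fin N → Fin N → ℝ)
    (hW1 : ∀ i p j q, W i p j q = - W p i j q)
    (hW2 : ∀ i p j q, W i p j q = - W i p q j)
    (hW3 : ∀ i p j q, W i p j q = W j q i p)
    (hBianchi : ∀ i p j q, W i p j q + W i j q p + W i q p j = 0)
    (hTrace : ∀ p q, ∑ i : Fin N, W i p i q = 0)
    (f : ℝ → ℝ)
    (hf : ∃ P : Polynomial ℝ, P.degree ≤ 4 ∧ ∀ x, f x = P.eval x)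
    (lam' : ℝ) (hlam' : 0 < lam')
    (u : EuclideanSpace ℝ (Fin N) → ℝ)
    (hu : ∀ y, u y = (lam' / (lam' ^ 2 + ‖y‖ ^ 2)) ^ (((N : ℝ) - 4) / 2)) :
    (∫ y : EuclideanSpace ℝ (Fin N),
        ∑ i : Fin N, ∑ j : Fin N, ∑ m : Fin N, ∑ s : Fin N,
          pd N i (Hbar N W f m s) y * pd N j (Hbar N W f m s) y
            * pd N i u y * pd N j u y)
      = sphereArea N
          * (∑ i : Fin N, ∑ j : Fin N, ∑ k : Fin N, ∑ l : Fin N,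
              (W i k j l + W i l j k) ^ 2)
          * lam' ^ (N - 4)
          * (2 * ((N : ℝ) - 4) ^ 2 / (N * ((N : ℝ) + 2)))
          * ∫ r in Set.Ioi (0 : ℝ),
              (r ^ 2 * deriv f (r ^ 2) + f (r ^ 2)) ^ 2
                * r ^ (N + 3) / (lam' ^ 2 + r ^ 2) ^ (N - 2) := by
  obtain ⟨P, -, hP⟩ := hf
  have hfe : f = fun x => P.eval x := funext hP
  have hfd : Differentiable ℝ f := by rw [hfe]; exact P.differentiable
  obtain ⟨c, hc⟩ := Kfour_formula N hN
  have hcv := c_value N hN c hc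
  set g : ℝ → ℝ := fun r => 4 * (r ^ 2 * deriv f (r ^ 2) + f (r ^ 2)) ^ 2 *
    (((N : ℝ) - 4) ^ 2 * lam' ^ (N - 4) / (lam' ^ 2 + r ^ 2) ^ (N - 2)) with hg
  have hpt : ∀ y : EuclideanSpace ℝ (Fin N),
      (∑ i : Fin N, ∑ j : Fin N, ∑ m : Fin N, ∑ s : Fin N,
          pd N i (Hbar N W f m s) y * pd N j (Hbar N W f m s) y
            * pd N i u y * pd N j u y)
      = (∑ m, ∑ s, Hmat N W m s y ^ 2) * g ‖y‖ := by
    intro y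
    obtain ⟨C, hC, hC2⟩ := pd_u N hN lam' hlam' u hu y
    have e1 : (∑ i : Fin N, ∑ j : Fin N, ∑ m : Fin N, ∑ s : Fin N,
          pd N i (Hbar N W f m s) y * pd N j (Hbar N W f m s) y
            * pd N i u y * pd N j u y)
        = ∑ m : Fin N, ∑ s : Fin N, C ^ 2 * (∑ i, pd N i (Hbar N W f m s) y * y i) ^ 2 := by
      have e2 : ∀ m s : Fin N, C ^ 2 * (∑ i, pd N i (Hbar N W f m s) y * y i) ^ 2
          = ∑ i : Fin N, ∑ j : Fin N, pd N i (Hbar N W f m s) y * pd N j (Hbar N W f m s) y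
            * pd N i u y * pd N j u y := by
        intro m s
        rw [sq (∑ i, pd N i (Hbar N W f m s) y * y i), Finset.sum_mul_sum, Finset.mul_sum]
        refine Finset.sum_congr rfl fun i _ => ?_
        rw [Finset.mul_sum]
        refine Finset.sum_congr rfl fun j _ => ?_
        rw [hC, hC]; ring
      simp only [e2]
      have e3 : ∀ F : Fin N → Fin N → Fin N → Fin N → ℝ,
          ∑ i, ∑ j, ∑ m, ∑ s, F i j m s = ∑ m, ∑ s, ∑ i, ∑ j, F i j m s := by
        intro F
        have := Finset.sum_comm (s := (Finset.univ : Finset (Fin N × Fin N)))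
          (t := (Finset.univ : Finset (Fin N × Fin N))) (f := fun a b => F a.1 a.2 b.1 b.2)
        simpa only [Fintype.sum_prod_type] using this
      exact e3 _
    rw [e1]
    simp only [euler_Hbar N W f hfd, hC2, hg, Finset.sum_mul]
    refine Finset.sum_congr rfl fun m _ => Finset.sum_congr rfl fun s _ => ?_
    ring
  rw [integral_congr_ae (Filter.Eventually.of_forall hpt),
    polar4 N hN (fun y => ∑ m, ∑ s, Hmat N W m s y ^ 2) g]
  · have hS : ∫ x : Metric.sphere (0 : EuclideanSpace ℝ (Fin N)) 1,
        ∑ m, ∑ s, Hmat N W m s x.1 ^ 2 ∂(sphereMeasure N)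
        = c / 2 * ∑ i : Fin N, ∑ j : Fin N, ∑ k : Fin N, ∑ l : Fin N,
              (W i k j l + W i l j k) ^ 2 := by
      have hI : ∀ m s, Integrable (fun x : Metric.sphere (0 : EuclideanSpace ℝ (Fin N)) 1 =>
          Hmat N W m s x.1 ^ 2) (sphereMeasure N) := fun m s =>
        cont_sphere_integrable N (fun y => Hmat N W m s y ^ 2) (by unfold Hmat; fun_prop)
      rw [integral_finsetSum _ (fun m _ => integrable_finsetSum _ (fun s _ => hI m s)),
        Finset.mul_sum]
      refine Finset.sum_congr rfl fun m _ => ?_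
      rw [integral_finsetSum _ (fun s _ => hI m s), Finset.mul_sum]
      refine Finset.sum_congr rfl fun s _ => ?_
      refine quadMoment N c hc (fun p q => W m p s q) ?_
      rw [← hTrace m s]
      refine Finset.sum_congr rfl fun p _ => ?_
      rw [hW1, hW2, neg_neg]
    rw [hS]
    have hR : ∫ r in Set.Ioi (0 : ℝ), r ^ (N + 3) * g r
        = (4 * ((N : ℝ) - 4) ^ 2 * lam' ^ (N - 4)) * ∫ r in Set.Ioi (0 : ℝ),
              (r ^ 2 * deriv f (r ^ 2) + f (r ^ 2)) ^ 2
                * r ^ (N + 3) / (lam' ^ 2 + r ^ 2) ^ (N - 2) := by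
      rw [← integral_const_mul]
      congr 1
      funext r
      simp only [hg]
      ring
    rw [hR, hcv]
    ring
  · intro t y
    simp only [Finset.mul_sum]
    refine Finset.sum_congr rfl fun m _ => Finset.sum_congr rfl fun s _ => ?_
    have : Hmat N W m s (t • y) = t ^ 2 * Hmat N W m s y := by
      unfold Hmat
      simp only [Finset.mul_sum, PiLp.smul_apply, smul_eq_mul]
      refine Finset.sum_congr rfl fun p _ => Finset.sum_congr rfl fun k _ => ?_
      ring
    rw [this]; ring
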